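/- arXiv:1509.06224 — 5 statements merged into one kernel-verified Lean document; each statement's English description precedes it below -/
import Mathlib

section
/- (Fiedler) Let u(x) = x^n + p x^{n−1} + r(x) be a monic polynomial of degree n over ℂ. Let d_1, …, d_{n−1} ∈ ℂ be pairwise distinct with u(d_j) ≠ 0 for every j. Set α = −p − ∑_{j=1}^{n−1} d_j, and choose ζ_1, …, ζ_{n−1} ∈ ℂ with ζ_j² = −u(d_j) / ∏_{i=1, i≠j}^{n−1}(d_j − d_i). Then the n×n symmetric arrowhead matrix A with diagonal entries d_1, …, d_{n−1}, α and arrow entries ζ_1, …, ζ_{n−1} has characteristic polynomial det(x·I − A) = u(x); equivalently, det(A − x·I) = (−1)^n u(x). -/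
/-- The `(m+1) × (m+1)` symmetric arrowhead matrix `A = [[D, z], [zᵀ, α]]` with
diagonal `d 0, …, d (m-1), α` and arrow entries `z 0, …, z (m-1)`. -/
def arrowhead {K : Type*} [CommRing K] {m : ℕ} (d z : Fin m → K) (α : K) :
    Matrix (Fin (m + 1)) (Fin (m + 1)) K :=
  Matrix.of fun j k =>
    if hj : (j : ℕ) < m then
      if hk : (k : ℕ) < m then
        if j = k then d ⟨j, hj⟩ else 0
      else z ⟨j, hj⟩
    else if hk : (k : ℕ) < m then z ⟨k, hk⟩ else α

open Polynomial in
theorem arrow_det_aux {m : ℕ} (d z : Fin m → ℂ) (α x : ℂ) (hx : ∀ i, x - d i ≠ 0) :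
    (Matrix.scalar (Fin (m+1)) x - arrowhead d z α).det =
      (x - α) * ∏ i, (x - d i) - ∑ k, z k ^ 2 * ∏ i ∈ Finset.univ.erase k, (x - d i) := by
  have hsub : (Matrix.scalar (Fin (m+1)) x - arrowhead d z α).submatrix
      (finSumFinEquiv : Fin m ⊕ Fin 1 ≃ Fin (m+1)) (finSumFinEquiv : Fin m ⊕ Fin 1 ≃ Fin (m+1)) =
      Matrix.fromBlocks (Matrix.diagonal fun i => x - d i) (Matrix.of fun i _ => - z i)
        (Matrix.of fun _ i => - z i) (Matrix.of fun _ _ => x - α) := by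
    ext i j
    rcases i with i | i <;> rcases j with j | j
    · by_cases h : i = j
      · subst h; simp [arrowhead]
      · have h2 : Fin.castAdd 1 i ≠ Fin.castAdd 1 j := fun e => h (Fin.castAdd_injective _ _ e)
        simp [arrowhead, h]
    · have h2 : Fin.castAdd 1 i ≠ Fin.natAdd m j := by
        intro e; have := congrArg Fin.val e; simp at this; omega
      simp [arrowhead, Matrix.diagonal_apply_ne _ h2]
    · have h2 : Fin.natAdd m i ≠ Fin.castAdd 1 j := by
        intro e; have := congrArg Fin.val e; simp at this; omega
      simp [arrowhead, Matrix.diagonal_apply_ne _ h2]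
    · obtain rfl : i = j := Subsingleton.elim _ _
      simp [arrowhead]
  rw [← Matrix.det_submatrix_equiv_self (finSumFinEquiv : Fin m ⊕ Fin 1 ≃ Fin (m+1)), hsub]
  have hmul : (Matrix.diagonal fun i => (x - d i)⁻¹) * (Matrix.diagonal fun i => x - d i) = 1 := by
    rw [Matrix.diagonal_mul_diagonal, ← Matrix.diagonal_one]
    congr 1; ext i; exact inv_mul_cancel₀ (hx i)
  have hmul2 : (Matrix.diagonal fun i => x - d i) * (Matrix.diagonal fun i => (x - d i)⁻¹) = 1 :=
    mul_eq_one_comm.mp hmul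
  letI : Invertible (Matrix.diagonal fun i => x - d i) := ⟨_, hmul, hmul2⟩
  have hinv : ⅟(Matrix.diagonal fun i => x - d i) = Matrix.diagonal fun i => (x - d i)⁻¹ := rfl
  rw [Matrix.det_fromBlocks₁₁, hinv, Matrix.det_diagonal, Matrix.det_fin_one]
  rw [Matrix.sub_apply, Matrix.mul_apply]
  simp only [Matrix.of_apply, Matrix.mul_diagonal]
  rw [mul_sub, mul_comm, Finset.mul_sum]
  congr 1
  refine Finset.sum_congr rfl fun k _ => ?_
  rw [← Finset.mul_prod_erase Finset.univ _ (Finset.mem_univ k)]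
  have := hx k
  field_simp

open Polynomial in
theorem arrow_charpoly_aux {m : ℕ} (d z : Fin m → ℂ) (α : ℂ) :
    (arrowhead d z α).charpoly =
      (X - C α) * ∏ i, (X - C (d i)) -
        ∑ k, C (z k ^ 2) * ∏ i ∈ Finset.univ.erase k, (X - C (d i)) := by
  apply Polynomial.eq_of_infinite_eval_eq
  refine (Set.Finite.infinite_compl (Set.finite_range d)).mono ?_
  intro x hx
  have hx' : ∀ i, x - d i ≠ 0 := fun i h => hx ⟨i, (sub_eq_zero.mp h).symm⟩
  simp only [Set.mem_setOf_eq]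
  rw [Matrix.eval_charpoly, arrow_det_aux d z α x hx']
  simp [eval_prod, eval_finset_sum]

/-- **Fiedler.** Let `u` be a monic polynomial over `ℂ` of degree `n = m + 1`, with
`p` its coefficient of `x^{n-1}`. Let `d_1, …, d_{n-1}` be pairwise distinct with
`u(d_j) ≠ 0`, set `α = -p - ∑_j d_j`, and choose `ζ_j` with
`ζ_j² = -u(d_j) / ∏_{i ≠ j} (d_j - d_i)`. Then the symmetric arrowhead matrix `A`
with diagonal `d_1, …, d_{n-1}, α` and arrow entries `ζ_1, …, ζ_{n-1}` satisfies
`det (x I - A) = u(x)`, i.e. the characteristic polynomial of `A` is `u`. -/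
theorem fiedler_charpoly (m : ℕ) (u : Polynomial ℂ) (hu : u.Monic)
    (hdeg : u.natDegree = m + 1) (d ζ : Fin m → ℂ)
    (hd : Function.Injective d) (hroot : ∀ j, u.eval (d j) ≠ 0)
    (α : ℂ) (hα : α = -u.coeff m - ∑ j, d j)
    (hζ : ∀ j, ζ j ^ 2 = -u.eval (d j) / ∏ i ∈ Finset.univ.erase j, (d j - d i)) :
    (arrowhead d ζ α).charpoly = u := by
  have hcm : (arrowhead d ζ α).charpoly.Monic := Matrix.charpoly_monic _
  have hcd : (arrowhead d ζ α).charpoly.natDegree = m + 1 := by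
    simp [Matrix.charpoly_natDegree_eq_dim]
  have htr : (arrowhead d ζ α).trace = ∑ j, d j + α := by
    simp [Matrix.trace, Fin.sum_univ_castSucc, arrowhead]
  have hcc : (arrowhead d ζ α).charpoly.coeff m = u.coeff m := by
    have := Matrix.trace_eq_neg_charpoly_coeff (arrowhead d ζ α)
    rw [htr, hα] at this
    simp at this
    rw [hα]
    exact this.symm
  refine Polynomial.eq_of_degree_sub_lt_of_eval_index_eq (s := Finset.univ) (v := d)
    hd.injOn ?_ ?_
  · rw [Finset.card_univ, Fintype.card_fin, Polynomial.degree_lt_iff_coeff_zero]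
    intro k hk
    rw [Polynomial.coeff_sub, sub_eq_zero]
    rcases Nat.lt_trichotomy k (m+1) with h | h | h
    · obtain rfl : k = m := by omega
      exact hcc
    · have h1 := hcm.coeff_natDegree
      have h2 := hu.coeff_natDegree
      rw [hcd] at h1
      rw [hdeg] at h2
      rw [h, h1, h2]
    · rw [Polynomial.coeff_eq_zero_of_natDegree_lt (by omega),
        Polynomial.coeff_eq_zero_of_natDegree_lt (by omega)]
  · intro j _
    have hne : ∏ i ∈ Finset.univ.erase j, (d j - d i) ≠ 0 := by
      refine Finset.prod_ne_zero_iff.mpr fun i hi => sub_ne_zero.mpr fun e => ?_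
      exact (Finset.ne_of_mem_erase hi) (hd e).symm
    rw [arrow_charpoly_aux]
    simp only [Polynomial.eval_sub, Polynomial.eval_mul, Polynomial.eval_prod,
      Polynomial.eval_finset_sum, Polynomial.eval_X, Polynomial.eval_C]
    rw [Finset.prod_eq_zero (Finset.mem_univ j) (sub_self _),
      Finset.sum_eq_single j]
    · rw [hζ j, div_mul_cancel₀ _ hne]; ring
    · intro k _ hk
      rw [Finset.prod_eq_zero (Finset.mem_erase.mpr ⟨hk.symm, Finset.mem_univ j⟩) (sub_self _),
        mul_zero]
    · intro h; exact absurd (Finset.mem_univ j) h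
end

section
/- Let u be a monic real polynomial of degree n with n distinct real roots λ_1 > λ_2 > ⋯ > λ_n, and let d_1 > d_2 > ⋯ > d_{n−1} be real numbers that interlace the roots, i.e., λ_{j+1} < d_j < λ_j for j = 1, …, n−1. Then for every j = 1, …, n−1, the quantity −u(d_j) / ∏_{i=1, i≠j}^{n−1}(d_j − d_i) is strictly positive; consequently ζ_j = √(−u(d_j)/∏_{i≠j}(d_j − d_i)) is a nonzero real number and the arrowhead matrix A of Fiedler's construction is real and symmetric. -/
/-- Let `u` be a monic real polynomial of degree `n = m + 1` with `n` distinct real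
roots `λ_1 > λ_2 > ⋯ > λ_n`, and let `d_1 > ⋯ > d_{n-1}` interlace the roots
(`λ_{j+1} < d_j < λ_j`). Then each quantity `-u(d_j) / ∏_{i ≠ j} (d_j - d_i)` is
strictly positive; consequently `ζ_j = √(-u(d_j)/∏_{i ≠ j}(d_j - d_i))` is a nonzero
real number and the arrowhead matrix `A` of Fiedler's construction is real
symmetric. -/
theorem fiedler_weights_pos (m : ℕ) (u : Polynomial ℝ) (hu : u.Monic)
    (hdeg : u.natDegree = m + 1) (lam : Fin (m + 1) → ℝ) (hlam : StrictAnti lam)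
    (hroots : ∀ k, u.eval (lam k) = 0)
    (d : Fin m → ℝ) (hd : StrictAnti d)
    (hinter : ∀ j : Fin m, lam j.succ < d j ∧ d j < lam j.castSucc)
    (α : ℝ) (hα : α = -u.coeff m - ∑ j, d j) :
    (∀ j : Fin m, 0 < -u.eval (d j) / ∏ i ∈ Finset.univ.erase j, (d j - d i)) ∧
    (∀ j : Fin m,
      Real.sqrt (-u.eval (d j) / ∏ i ∈ Finset.univ.erase j, (d j - d i)) ≠ 0) ∧
    (arrowhead d
      (fun j => Real.sqrt (-u.eval (d j) / ∏ i ∈ Finset.univ.erase j, (d j - d i)))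
      α).IsSymm := by
  have key : ∀ j : Fin m, 0 < -u.eval (d j) / ∏ i ∈ Finset.univ.erase j, (d j - d i) := by
    intro j
    have hu' : u = ∏ k, (Polynomial.X - Polynomial.C (lam k)) := by
      have hdvd : (∏ k, (Polynomial.X - Polynomial.C (lam k))) ∣ u := by
        apply Finset.prod_dvd_of_coprime
        · intro a _ b _ hab
          exact Polynomial.pairwise_coprime_X_sub_C hlam.injective hab
        · intro k _
          exact Polynomial.dvd_iff_isRoot.mpr (hroots k)
      have hm : (∏ k, (Polynomial.X - Polynomial.C (lam k))).Monic :=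
        Polynomial.monic_prod_of_monic _ _ fun k _ => Polynomial.monic_X_sub_C _
      refine (Polynomial.eq_of_monic_of_dvd_of_natDegree_le hm hu hdvd ?_)
      rw [hdeg, Polynomial.natDegree_prod_of_monic _ _ fun k _ => Polynomial.monic_X_sub_C _]
      simp
    have he : u.eval (d j) = (d j - lam j.castSucc) * ((d j - lam j.succ) *
        ∏ i ∈ Finset.univ.erase j, (d j - lam (j.castSucc.succAbove i))) := by
      rw [hu', Polynomial.eval_prod, Fin.prod_univ_succAbove _ j.castSucc,
        ← Finset.mul_prod_erase _ _ (Finset.mem_univ j)]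
      simp
    have hr : 0 < (∏ i ∈ Finset.univ.erase j, (d j - lam (j.castSucc.succAbove i))) /
        ∏ i ∈ Finset.univ.erase j, (d j - d i) := by
      rw [← Finset.prod_div_distrib]
      apply Finset.prod_pos
      intro i hi
      have hne : i ≠ j := Finset.ne_of_mem_erase hi
      rcases lt_or_gt_of_ne hne with h | h
      · rw [Fin.succAbove_of_castSucc_lt _ _ (by simpa using h)]
        have h1 := hd h
        have h2 := (hinter i).2
        exact div_pos_of_neg_of_neg (by linarith) (by linarith)
      · rw [Fin.succAbove_of_le_castSucc _ _ (by simpa using h.le)]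
        have h1 := hd h
        have h2 := (hinter i).1
        exact div_pos (by linarith) (by linarith)
    have h1 := (hinter j).1
    have h2 := (hinter j).2
    have : -u.eval (d j) / ∏ i ∈ Finset.univ.erase j, (d j - d i) =
        (lam j.castSucc - d j) * (d j - lam j.succ) *
        ((∏ i ∈ Finset.univ.erase j, (d j - lam (j.castSucc.succAbove i))) /
        ∏ i ∈ Finset.univ.erase j, (d j - d i)) := by
      rw [he]; ring
    rw [this]
    exact mul_pos (mul_pos (by linarith) (by linarith)) hr
  refine ⟨key, fun j => (Real.sqrt_pos.mpr (key j)).ne', ?_⟩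
  apply Matrix.IsSymm.ext
  intro i j
  simp only [arrowhead, Matrix.of_apply]
  by_cases hi : (i : ℕ) < m <;> by_cases hj : (j : ℕ) < m
  · by_cases h : i = j
    · subst h; rfl
    · simp [hi, hj, h, Ne.symm h]
  · simp [hi, hj]
  · simp [hi, hj]
  · simp [hi, hj]
end

section
/- Let A be the n×n real symmetric arrowhead matrix with pairwise distinct diagonal entries d_1, …, d_{n−1}, last diagonal entry α, and arrow entries ζ_1, …, ζ_{n−1}, and fix an index i with 1 ≤ i ≤ n−1 and ζ_i ≠ 0. Let A_i = A − d_i·I. Then A_i is invertible, and its inverse is the matrix B with entries: B_{jj} = 1/(d_j − d_i) for j ∉ {i, n}; B_{ji} = B_{ij} = −ζ_j / ((d_j − d_i)·ζ_i) for j ∉ {i, n}; B_{ni} = B_{in} = 1/ζ_i; B_{ii} = b where b = (1/ζ_i²)·(−(α − d_i) + ∑_{j=1, j≠i}^{n−1} ζ_j²/(d_j − d_i)); and all other entries of B are zero. In particular B is again symmetric, with a 'double arrow' structure. -/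
/-- The explicit "double arrow" matrix `B` claimed to be the inverse of the shifted
arrowhead matrix `A_i = A - d_i I`:  `B_{jj} = 1/(d_j - d_i)` for `j ∉ {i, n}`,
`B_{ji} = B_{ij} = -ζ_j/((d_j - d_i) ζ_i)` for `j ∉ {i, n}`, `B_{ni} = B_{in} = 1/ζ_i`,
`B_{ii} = b = (1/ζ_i²)(-(α - d_i) + ∑_{j ≠ i} ζ_j²/(d_j - d_i))`, all other entries `0`. -/
noncomputable def doubleArrow {m : ℕ} (d z : Fin m → ℝ) (α : ℝ) (i : Fin m) :
    Matrix (Fin (m + 1)) (Fin (m + 1)) ℝ :=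
  Matrix.of fun j k =>
    if hj : (j : ℕ) < m then
      if hk : (k : ℕ) < m then
        if j = k then
          if (j : ℕ) = (i : ℕ) then
            (1 / z i ^ 2) *
              (-(α - d i) + ∑ l ∈ Finset.univ.erase i, z l ^ 2 / (d l - d i))
          else 1 / (d ⟨j, hj⟩ - d i)
        else if (k : ℕ) = (i : ℕ) then -z ⟨j, hj⟩ / ((d ⟨j, hj⟩ - d i) * z i)
        else if (j : ℕ) = (i : ℕ) then -z ⟨k, hk⟩ / ((d ⟨k, hk⟩ - d i) * z i)
        else 0
      else if (j : ℕ) = (i : ℕ) then 1 / z i else 0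
    else if hk : (k : ℕ) < m then
      if (k : ℕ) = (i : ℕ) then 1 / z i else 0
    else 0

lemma arrow_shift_cc {m : ℕ} (d z : Fin m → ℝ) (α c : ℝ) (a b : Fin m) :
    (arrowhead d z α - c • (1 : Matrix (Fin (m + 1)) (Fin (m + 1)) ℝ)) a.castSucc b.castSucc
      = if a = b then d a - c else 0 := by
  by_cases h : a = b <;> simp [arrowhead, Matrix.one_apply, h]

lemma arrow_shift_cl {m : ℕ} (d z : Fin m → ℝ) (α c : ℝ) (a : Fin m) :
    (arrowhead d z α - c • (1 : Matrix (Fin (m + 1)) (Fin (m + 1)) ℝ)) a.castSucc (Fin.last m)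
      = z a := by
  simp [arrowhead, Matrix.one_apply, (Fin.castSucc_lt_last a).ne]

lemma arrow_shift_lc {m : ℕ} (d z : Fin m → ℝ) (α c : ℝ) (a : Fin m) :
    (arrowhead d z α - c • (1 : Matrix (Fin (m + 1)) (Fin (m + 1)) ℝ)) (Fin.last m) a.castSucc
      = z a := by
  simp [arrowhead, Matrix.one_apply, (Fin.castSucc_lt_last a).ne']

lemma arrow_shift_ll {m : ℕ} (d z : Fin m → ℝ) (α c : ℝ) :
    (arrowhead d z α - c • (1 : Matrix (Fin (m + 1)) (Fin (m + 1)) ℝ)) (Fin.last m) (Fin.last m)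
      = α - c := by
  simp [arrowhead]

lemma dbl_cc {m : ℕ} (d z : Fin m → ℝ) (α : ℝ) (i a b : Fin m) :
    doubleArrow d z α i a.castSucc b.castSucc =
      if a = b then
        if a = i then (1 / z i ^ 2) *
              (-(α - d i) + ∑ l ∈ Finset.univ.erase i, z l ^ 2 / (d l - d i))
        else 1 / (d a - d i)
      else if b = i then -z a / ((d a - d i) * z i)
      else if a = i then -z b / ((d b - d i) * z i)
      else 0 := by
  simp only [doubleArrow, Matrix.of_apply, Fin.val_castSucc, Fin.is_lt, dif_pos,
    Fin.castSucc_inj, Fin.eta, Fin.val_inj]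

lemma dbl_cl {m : ℕ} (d z : Fin m → ℝ) (α : ℝ) (i a : Fin m) :
    doubleArrow d z α i a.castSucc (Fin.last m) = if a = i then 1 / z i else 0 := by
  simp [doubleArrow, Fin.val_inj]

lemma dbl_lc {m : ℕ} (d z : Fin m → ℝ) (α : ℝ) (i a : Fin m) :
    doubleArrow d z α i (Fin.last m) a.castSucc = if a = i then 1 / z i else 0 := by
  simp [doubleArrow, Fin.val_inj]

lemma dbl_ll {m : ℕ} (d z : Fin m → ℝ) (α : ℝ) (i : Fin m) :
    doubleArrow d z α i (Fin.last m) (Fin.last m) = 0 := by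
  simp [doubleArrow]

lemma arrow_mul_dbl {m : ℕ} (d z : Fin m → ℝ) (α : ℝ) (i : Fin m)
    (hd : Function.Injective d) (hz : z i ≠ 0) :
    (arrowhead d z α - d i • (1 : Matrix (Fin (m + 1)) (Fin (m + 1)) ℝ)) *
        doubleArrow d z α i = 1 := by
  have hne : ∀ a, a ≠ i → d a - d i ≠ 0 := fun a ha => sub_ne_zero.2 (hd.ne ha)
  ext j k
  rw [Matrix.mul_apply, Fin.sum_univ_castSucc]
  induction j using Fin.lastCases with
  | last =>
    induction k using Fin.lastCases with
    | last =>
      simp only [arrow_shift_lc, arrow_shift_ll, dbl_cl, dbl_ll]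
      simp [hz]
    | cast b =>
      simp only [arrow_shift_lc, arrow_shift_ll, dbl_cc, dbl_lc]
      rw [Matrix.one_apply_ne (Fin.castSucc_lt_last b).ne',
        ← Finset.add_sum_erase _ _ (Finset.mem_univ i)]
      by_cases hb : b = i
      · subst hb
        have : ∀ x ∈ Finset.univ.erase b, (z x * (if x = b then
            if x = b then (1 / z b ^ 2) *
              (-(α - d b) + ∑ l ∈ Finset.univ.erase b, z l ^ 2 / (d l - d b))
            else 1 / (d x - d b)
            else if b = b then -z x / ((d x - d b) * z b)
            else if x = b then -z b / ((d b - d b) * z b)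
            else 0)) = -(1 / z b) * (z x ^ 2 / (d x - d b)) := by
          intro x hx
          have hx := Finset.ne_of_mem_erase hx
          have := hne x hx
          simp only [hx, if_false, if_true]
          field_simp
        rw [Finset.sum_congr rfl this, ← Finset.mul_sum]
        simp only [if_true]
        field_simp
        ring
      · have h2 := hne b hb
        generalize (∑ l ∈ Finset.univ.erase i, z l ^ 2 / (d l - d i)) = S
        rw [Finset.sum_eq_single_of_mem b (by simp [hb])]
        · simp only [hb, Ne.symm hb, if_false, if_true]
          field_simp
          ring
        · intro x hx hxb
          simp [hxb, hb, Finset.ne_of_mem_erase hx]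
  | cast a =>
    simp only [arrow_shift_cc, arrow_shift_cl, ite_mul, zero_mul, Finset.sum_ite_eq,
      Finset.mem_univ, if_true]
    induction k using Fin.lastCases with
    | last =>
      rw [Matrix.one_apply_ne (Fin.castSucc_lt_last a).ne, dbl_cl, dbl_ll]
      by_cases ha : a = i <;> simp [ha]
    | cast b =>
      rw [dbl_cc, dbl_lc, Matrix.one_apply]
      simp only [Fin.castSucc_inj]
      by_cases ha : a = i
      · subst ha
        by_cases hb : b = a
        · subst hb; simp [hz]
        · simp [hb, Ne.symm hb]
      · have h2 := hne a ha
        by_cases hb : b = i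
        · subst hb
          simp only [ha, if_false, if_true]
          field_simp
          ring
        · by_cases hab : a = b
          · subst hab; simp [ha, h2]
          · simp [ha, hb, hab]

lemma dbl_symm {m : ℕ} (d z : Fin m → ℝ) (α : ℝ) (i : Fin m) :
    (doubleArrow d z α i).IsSymm := by
  ext j k
  rw [Matrix.transpose_apply]
  induction j using Fin.lastCases with
  | last =>
    induction k using Fin.lastCases with
    | last => rfl
    | cast b => rw [dbl_cl, dbl_lc]
  | cast a =>
    induction k using Fin.lastCases with
    | last => rw [dbl_cl, dbl_lc]
    | cast b =>
      rw [dbl_cc, dbl_cc]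
      by_cases hab : a = b
      · subst hab; rfl
      · by_cases ha : a = i
        · subst ha
          simp [hab, Ne.symm hab]
        · simp [hab, Ne.symm hab, ha]

/-- Let `A` be the real symmetric arrowhead matrix with pairwise distinct diagonal
entries `d_1, …, d_{n-1}`, last diagonal entry `α`, arrow entries `ζ_1, …, ζ_{n-1}`,
and fix `i ≤ n - 1` with `ζ_i ≠ 0`.  Then `A_i = A - d_i I` is invertible with inverse
the symmetric "double arrow" matrix `B` described above. -/
theorem shifted_arrowhead_inverse (m : ℕ) (d z : Fin m → ℝ) (α : ℝ) (i : Fin m)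
    (hd : Function.Injective d) (hz : z i ≠ 0) :
    (arrowhead d z α - d i • (1 : Matrix (Fin (m + 1)) (Fin (m + 1)) ℝ)) *
        doubleArrow d z α i = 1 ∧
    doubleArrow d z α i *
        (arrowhead d z α - d i • (1 : Matrix (Fin (m + 1)) (Fin (m + 1)) ℝ)) = 1 ∧
    (doubleArrow d z α i).IsSymm := by
  have h := arrow_mul_dbl d z α i hd hz
  exact ⟨h, mul_eq_one_comm.1 h, dbl_symm d z α i⟩
end

section
/- Let A be an n×n real symmetric irreducible arrowhead matrix, i.e., its diagonal entries satisfy d_1 > d_2 > ⋯ > d_{n−1} (pairwise distinct) and its arrow entries satisfy ζ_j ≠ 0 for all j = 1, …, n−1. Then A has n distinct real eigenvalues λ_1 > λ_2 > ⋯ > λ_n, and they strictly interlace the diagonal entries: λ_1 > d_1 > λ_2 > d_2 > ⋯ > d_{n−1} > λ_n. -/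
lemma arrowhead_isHermitian {m : ℕ} (d z : Fin m → ℝ) (α : ℝ) :
    (arrowhead d z α).IsHermitian := by
  ext i j
  simp only [arrowhead, Matrix.conjTranspose_apply, Matrix.of_apply, star_trivial]
  split_ifs <;> simp_all

lemma arrowhead_mulVec_castSucc {m : ℕ} (d z : Fin m → ℝ) (α : ℝ) (v : Fin (m + 1) → ℝ)
    (j : Fin m) : (arrowhead d z α).mulVec v j.castSucc =
      d j * v j.castSucc + z j * v (Fin.last m) := by
  simp [Matrix.mulVec, dotProduct, Fin.sum_univ_castSucc, arrowhead]

lemma arrowhead_mulVec_last {m : ℕ} (d z : Fin m → ℝ) (α : ℝ) (v : Fin (m + 1) → ℝ) :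
    (arrowhead d z α).mulVec v (Fin.last m) =
      ∑ j, z j * v j.castSucc + α * v (Fin.last m) := by
  simp [Matrix.mulVec, dotProduct, Fin.sum_univ_castSucc, arrowhead]

lemma arrowhead_last_ne {m : ℕ} (d z : Fin m → ℝ) (α : ℝ) (hd : StrictAnti d)
    (hz : ∀ j, z j ≠ 0) (v : Fin (m + 1) → ℝ) (μ : ℝ) (hv : v ≠ 0)
    (h : (arrowhead d z α).mulVec v = μ • v) : v (Fin.last m) ≠ 0 := by
  intro h0
  apply hv
  have h1 : ∀ j : Fin m, d j * v j.castSucc = μ * v j.castSucc := by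
    intro j
    have := congrFun h j.castSucc
    rw [arrowhead_mulVec_castSucc, h0] at this
    simpa using this
  have h2 : ∑ j, z j * v j.castSucc = 0 := by
    have := congrFun h (Fin.last m)
    rw [arrowhead_mulVec_last] at this
    simpa [h0] using this
  funext i
  refine Fin.lastCases h0 (fun j => ?_) i
  by_contra hj
  change v j.castSucc ≠ 0 at hj
  have hμ : d j = μ := mul_right_cancel₀ hj (h1 j)
  rw [Finset.sum_eq_single j] at h2
  · exact mul_ne_zero (hz j) hj h2
  · intro k _ hk
    by_contra hk0
    have hk1 : v k.castSucc ≠ 0 := right_ne_zero_of_mul hk0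
    have : d k = μ := mul_right_cancel₀ hk1 (h1 k)
    exact hk (hd.injective (this.trans hμ.symm))
  · simp

lemma arrowhead_ne_diag {m : ℕ} (d z : Fin m → ℝ) (α : ℝ) (hd : StrictAnti d)
    (hz : ∀ j, z j ≠ 0) (v : Fin (m + 1) → ℝ) (μ : ℝ) (hv : v ≠ 0)
    (h : (arrowhead d z α).mulVec v = μ • v) (j : Fin m) : μ ≠ d j := by
  rintro rfl
  have := congrFun h j.castSucc
  rw [arrowhead_mulVec_castSucc] at this
  have h3 : z j * v (Fin.last m) = 0 := by simpa using this
  exact mul_ne_zero (hz j) (arrowhead_last_ne d z α hd hz v _ hv h) h3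

lemma arrowhead_not_orth {m : ℕ} (d z : Fin m → ℝ) (α : ℝ) (hd : StrictAnti d)
    (hz : ∀ j, z j ≠ 0) (v u : Fin (m + 1) → ℝ) (x y : ℝ) (hv : v ≠ 0) (hu : u ≠ 0)
    (h : (arrowhead d z α).mulVec v = x • v) (h' : (arrowhead d z α).mulVec u = y • u)
    (hxy : ∀ j, x < d j ↔ y < d j) : ∑ i, v i * u i ≠ 0 := by
  intro h0
  rw [Fin.sum_univ_castSucc] at h0
  set a := v (Fin.last m) with ha
  set b := u (Fin.last m) with hb
  have hab : a * b ≠ 0 := mul_ne_zero (arrowhead_last_ne d z α hd hz v x hv h)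
    (arrowhead_last_ne d z α hd hz u y hu h')
  have key : ∀ j : Fin m, 0 ≤ (a * b) * (v j.castSucc * u j.castSucc) := by
    intro j
    have e1 := congrFun h j.castSucc
    have e2 := congrFun h' j.castSucc
    rw [arrowhead_mulVec_castSucc] at e1 e2
    simp only [Pi.smul_apply, smul_eq_mul, ← ha, ← hb] at e1 e2
    have e1' : z j * a = (x - d j) * v j.castSucc := by linarith
    have e2' : z j * b = (y - d j) * u j.castSucc := by linarith
    have nx := arrowhead_ne_diag d z α hd hz v x hv h j
    have ny := arrowhead_ne_diag d z α hd hz u y hu h' j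
    have pos : 0 < (x - d j) * (y - d j) := by
      rcases lt_or_gt_of_ne nx with hx | hx
      · exact mul_pos_of_neg_of_neg (by linarith) (by linarith [(hxy j).1 hx])
      · have : ¬ y < d j := fun hy => absurd ((hxy j).2 hy) (not_lt.2 hx.le)
        have : d j < y := lt_of_le_of_ne (not_lt.1 this) ny.symm
        exact mul_pos (by linarith) (by linarith)
    have e : ((x - d j) * (y - d j)) * ((a * b) * (v j.castSucc * u j.castSucc))
        = (z j * (a * b)) ^ 2 := by
      calc _ = ((x - d j) * v j.castSucc) * ((y - d j) * u j.castSucc) * (a * b) := by ring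
        _ = _ := by rw [← e1', ← e2']; ring
    exact nonneg_of_mul_nonneg_right (by rw [e]; positivity) pos
  have hs : 0 ≤ ∑ j : Fin m, (a * b) * (v j.castSucc * u j.castSucc) :=
    Finset.sum_nonneg fun j _ => key j
  rw [← Finset.mul_sum] at hs
  have : 0 < (a * b) * (a * b) := mul_self_pos.2 hab
  have h4 : (a * b) * (∑ j : Fin m, v j.castSucc * u j.castSucc + a * b) = 0 := by
    rw [h0, mul_zero]
  nlinarith

/-- Let `A` be an `n × n` real symmetric *irreducible* arrowhead matrix: its diagonal
entries satisfy `d_1 > d_2 > ⋯ > d_{n-1}` and its arrow entries satisfy `ζ_j ≠ 0`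
for all `j`.  Then `A` has `n` distinct real eigenvalues `λ_1 > λ_2 > ⋯ > λ_n`
which strictly interlace the diagonal entries:
`λ_1 > d_1 > λ_2 > d_2 > ⋯ > d_{n-1} > λ_n`. -/
theorem irreducible_arrowhead_eigenvalues_interlace (m : ℕ) (d z : Fin m → ℝ)
    (α : ℝ) (hd : StrictAnti d) (hz : ∀ j, z j ≠ 0) :
    ∃ lam : Fin (m + 1) → ℝ, StrictAnti lam ∧
      (∀ μ : ℝ, Module.End.HasEigenvalue (Matrix.toLin' (arrowhead d z α)) μ ↔
        ∃ k, μ = lam k) ∧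
      ∀ j : Fin m, lam j.castSucc > d j ∧ d j > lam j.succ := by
  classical
  have hA := arrowhead_isHermitian d z α
  set ev : Fin (m + 1) → ℝ := hA.eigenvalues with hev
  let w : Fin (m + 1) → Fin (m + 1) → ℝ := fun i => (hA.eigenvectorBasis i).ofLp
  have hw : ∀ i, (arrowhead d z α).mulVec (w i) = ev i • w i := fun i =>
    hA.mulVec_eigenvectorBasis i
  have hw0 : ∀ i, w i ≠ 0 := by
    intro i h
    apply hA.eigenvectorBasis.orthonormal.ne_zero i
    ext k
    exact congrFun h k
  have horth : ∀ i j, i ≠ j → ∑ k, w i k * w j k = 0 := by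
    intro i j hij
    have := hA.eigenvectorBasis.orthonormal.2 hij
    beta_reduce at this
    rw [PiLp.inner_apply] at this
    rw [← this]
    refine Finset.sum_congr rfl fun k _ => ?_
    simp [w, mul_comm]
  let S : ℝ → Finset (Fin m) := fun x => Finset.univ.filter fun j => x < d j
  have hS : ∀ x j, j ∈ S x ↔ x < d j := by intro x j; simp [S]
  have hSm : ∀ x y, x ≤ y → S y ⊆ S x := by
    intro x y hxy j hj
    rw [hS] at *
    exact lt_of_le_of_lt hxy hj
  let c : Fin (m + 1) → Fin (m + 1) := fun i =>
    ⟨(S (ev i)).card, Nat.lt_succ_of_le (by simpa using Finset.card_le_univ (S (ev i)))⟩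
  have hc : Function.Injective c := by
    intro i j hij
    by_contra hne
    have hcard : (S (ev i)).card = (S (ev j)).card := congrArg Fin.val hij
    have hSS : S (ev i) = S (ev j) := by
      rcases le_total (ev i) (ev j) with h | h
      · exact (Finset.eq_of_subset_of_card_le (hSm _ _ h) hcard.le).symm
      · exact Finset.eq_of_subset_of_card_le (hSm _ _ h) hcard.ge
    refine arrowhead_not_orth d z α hd hz (w i) (w j) (ev i) (ev j) (hw0 i) (hw0 j) (hw i) (hw j)
      (fun k => ?_) (horth i j hne)
    rw [← hS, ← hS, hSS]
  let e : Fin (m + 1) ≃ Fin (m + 1) := Equiv.ofBijective c (Finite.injective_iff_bijective.1 hc)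
  have he : ∀ k, (S (ev (e.symm k))).card = (k : ℕ) := fun k =>
    congrArg Fin.val (e.apply_symm_apply k)
  refine ⟨fun k => ev (e.symm k), ?_, ?_, ?_⟩
  · intro k l hkl
    by_contra h
    have := Finset.card_le_card (hSm _ _ (not_lt.1 h))
    rw [he, he] at this
    exact absurd hkl (not_lt.2 this)
  · intro μ
    rw [Module.End.hasEigenvalue_iff_mem_spectrum, Matrix.spectrum_toLin',
      hA.spectrum_real_eq_range_eigenvalues]
    constructor
    · rintro ⟨i, rfl⟩
      exact ⟨e i, by simp [hev]⟩
    · rintro ⟨k, rfl⟩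
      exact ⟨e.symm k, rfl⟩
  · intro j
    have hne : ∀ k, ev (e.symm k) ≠ d j := fun k =>
      arrowhead_ne_diag d z α hd hz _ _ (hw0 _) (hw _) j
    constructor
    · refine lt_of_le_of_ne (not_lt.1 fun h => ?_) (hne _).symm
      have hsub : Finset.Iic j ⊆ S (ev (e.symm j.castSucc)) := by
        intro i hi
        rw [hS]
        exact lt_of_lt_of_le h (hd.antitone (Finset.mem_Iic.1 hi))
      have := Finset.card_le_card hsub
      rw [he, Fin.card_Iic, Fin.val_castSucc] at this
      omega
    · refine lt_of_le_of_ne (not_lt.1 fun h => ?_) (hne _)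
      have hsub : S (ev (e.symm j.succ)) ⊆ Finset.Iio j := by
        intro i hi
        rw [hS] at hi
        exact Finset.mem_Iio.2 (hd.lt_iff_gt.1 (h.trans hi))
      have := Finset.card_le_card hsub
      rw [he, Fin.card_Iio, Fin.val_succ] at this
      omega
end

section
/- Let u be a monic real polynomial of degree n with n distinct real roots λ_1 > ⋯ > λ_n, let d_1 > ⋯ > d_{n−1} be real numbers with λ_{j+1} < d_j < λ_j for all j, let α = −p − ∑_{j=1}^{n−1} d_j where p is the coefficient of x^{n−1} in u, and let ζ_j = √(−u(d_j)/∏_{i≠j}(d_j − d_i)) (which is a positive real number). Then the real symmetric arrowhead matrix A with diagonal d_1, …, d_{n−1}, α and arrow entries ζ_1, …, ζ_{n−1} has spectrum exactly {λ_1, …, λ_n}; i.e., the eigenvalues of A are precisely the roots of u. -/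
open Polynomial in
theorem fs_interp (m : ℕ) (u : ℝ[X]) (hu : u.Monic) (hdeg : u.natDegree = m + 1)
    (d : Fin m → ℝ) (hd : Function.Injective d) (α : ℝ) (hα : α = -u.coeff m - ∑ j, d j)
    (x : ℝ) :
    u.eval x = (x - α) * ∏ j, (x - d j) +
      ∑ j, u.eval (d j) * ∏ i ∈ Finset.univ.erase j, ((d j - d i)⁻¹ * (x - d i)) := by
  set P : ℝ[X] := ∏ j, (X - C (d j)) with hP
  have hPm : P.Monic := monic_prod_of_monic _ _ fun j _ => monic_X_sub_C _
  have hPd : P.natDegree = m := by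
    rw [hP, natDegree_prod_of_monic _ _ fun j _ => monic_X_sub_C _]; simp
  set G : ℝ[X] := (X - C α) * P with hG
  have hGm : G.Monic := (monic_X_sub_C α).mul hPm
  have hGd : G.natDegree = m + 1 := by
    rw [hG, (monic_X_sub_C α).natDegree_mul hPm, hPd, natDegree_X_sub_C, add_comm]
  have hGc : G.coeff m = u.coeff m := by
    have h1 : G.nextCoeff = G.coeff m := by
      rw [nextCoeff_of_natDegree_pos (by omega), hGd]; rfl
    rw [← h1, hG, (monic_X_sub_C α).nextCoeff_mul hPm, hP, prod_X_sub_C_nextCoeff,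
      nextCoeff_X_sub_C, hα]
    ring
  have hR : (u - G).degree < (m : ℕ) := by
    rw [degree_lt_iff_coeff_zero]
    intro k hk
    rcases Nat.lt_or_ge (m + 1) k with h | h
    · rw [coeff_sub, coeff_eq_zero_of_natDegree_lt (by omega),
        coeff_eq_zero_of_natDegree_lt (by omega), sub_zero]
    · rcases Nat.lt_or_ge m k with h' | h'
      · obtain rfl : k = m + 1 := by omega
        have a := hu.coeff_natDegree
        have b := hGm.coeff_natDegree
        rw [hdeg] at a
        rw [hGd] at b
        rw [coeff_sub, a, b, sub_self]
      · obtain rfl : k = m := by omega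
        rw [coeff_sub, hGc, sub_self]
  have hL := Lagrange.eq_interpolate (s := Finset.univ) (v := d) (f := u - G)
    hd.injOn (by simpa using hR)
  have hev : ∀ j, (u - G).eval (d j) = u.eval (d j) := by
    intro j
    have : P.eval (d j) = 0 := by
      rw [hP, eval_prod]
      exact Finset.prod_eq_zero (Finset.mem_univ j) (by simp)
    simp [hG, this]
  have h2 := congrArg (eval x) hL
  simp only [hev, Lagrange.interpolate_apply, Lagrange.basis, Lagrange.basisDivisor,
    eval_finsetSum, eval_mul, eval_C, eval_prod, eval_sub, eval_X] at h2
  rw [← h2, hG, hP]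
  simp [eval_prod]

open Polynomial in
theorem fs_prod (m : ℕ) (u : ℝ[X]) (hu : u.Monic) (hdeg : u.natDegree = m)
    (lam : Fin m → ℝ) (hlam : Function.Injective lam) (hroots : ∀ k, u.eval (lam k) = 0) 
    (x : ℝ) : u.eval x = ∏ k, (x - lam k) := by
  have hPm : (∏ j, (X - C (lam j))).Monic := monic_prod_of_monic _ _ fun j _ => monic_X_sub_C _
  have hPd : (∏ j, (X - C (lam j))).natDegree = m := by
    rw [natDegree_prod_of_monic _ _ fun j _ => monic_X_sub_C _]; simp
  have hdvd : (∏ j, (X - C (lam j))) ∣ u := by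
    apply Finset.prod_dvd_of_coprime
    · intro i _ j _ hij
      exact isCoprime_X_sub_C_of_isUnit_sub (sub_ne_zero.2 (hlam.ne hij)).isUnit
    · intro i _
      exact dvd_iff_isRoot.2 (hroots i)
  have := eq_of_monic_of_dvd_of_natDegree_le hPm hu hdvd (by omega)
  rw [this, eval_prod]
  simp

theorem fs_pos (m : ℕ) (lam : Fin (m + 1) → ℝ) 
    (d : Fin m → ℝ) (hd : StrictAnti d)
    (hinter : ∀ j : Fin m, lam j.succ < d j ∧ d j < lam j.castSucc) (j : Fin m) :
    0 ≤ -(∏ k, (d j - lam k)) / ∏ i ∈ Finset.univ.erase j, (d j - d i) := by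
  rw [Fin.prod_univ_succAbove _ j.castSucc,
    ← Finset.mul_prod_erase Finset.univ _ (Finset.mem_univ j), Fin.succAbove_castSucc_self]
  have h : 0 ≤ (∏ i ∈ Finset.univ.erase j, (d j - lam (j.castSucc.succAbove i))) /
      ∏ i ∈ Finset.univ.erase j, (d j - d i) := by
    rw [← Finset.prod_div_distrib]
    apply Finset.prod_nonneg
    intro i hi
    rcases lt_or_gt_of_ne (Finset.ne_of_mem_erase hi) with h | h
    · rw [Fin.succAbove_of_castSucc_lt _ _ (by simpa using h)]
      have := hd h
      have := (hinter i).2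
      exact div_nonneg_of_nonpos (by linarith) (by linarith)
    · rw [Fin.succAbove_of_le_castSucc _ _ (by simpa using h.le)]
      have := hd h
      have := (hinter i).1
      exact div_nonneg (by linarith) (by linarith)
  have h1 : 0 ≤ (lam j.castSucc - d j) * (d j - lam j.succ) :=
    mul_nonneg (by linarith [(hinter j).2]) (by linarith [(hinter j).1])
  have := mul_nonneg h1 h
  refine this.trans_eq ?_
  ring

theorem fs_eig (m : ℕ) (d z : Fin m → ℝ) (α μ : ℝ) (hne : ∀ j, μ - d j ≠ 0)
    (h : μ - α = ∑ j, z j ^ 2 / (μ - d j)) :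
    Module.End.HasEigenvalue (Matrix.toLin' (arrowhead d z α)) μ := by
  apply Module.End.hasEigenvalue_of_hasEigenvector
    (x := Fin.snoc (α := fun _ => ℝ) (fun j => z j / (μ - d j)) 1)
  rw [Module.End.hasEigenvector_iff, Module.End.mem_eigenspace_iff]
  constructor
  · rw [Matrix.toLin'_apply]
    ext k
    rw [Matrix.mulVec, dotProduct, Fin.sum_univ_castSucc]
    refine Fin.lastCases ?_ (fun j => ?_) k
    · simp only [arrowhead, Matrix.of_apply]
      simp
      have : ∑ j, z j * (z j / (μ - d j)) = ∑ j, z j ^ 2 / (μ - d j) :=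
        Finset.sum_congr rfl fun j _ => by ring
      rw [this, ← h]; ring
    · simp only [arrowhead, Matrix.of_apply]
      simp
      have := hne j
      field_simp
      ring
  · intro h0
    have := congrFun h0 (Fin.last m)
    simp at this

/-- Let `u` be a monic real polynomial of degree `n = m + 1` with `n` distinct real
roots `λ_1 > ⋯ > λ_n`, let `d_1 > ⋯ > d_{n-1}` satisfy `λ_{j+1} < d_j < λ_j`, let
`α = -p - ∑_j d_j` where `p` is the coefficient of `x^{n-1}` in `u`, and let
`ζ_j = √(-u(d_j)/∏_{i ≠ j}(d_j - d_i))`.  Then the eigenvalues of the real symmetric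
arrowhead matrix `A` with diagonal `d_1, …, d_{n-1}, α` and arrow entries
`ζ_1, …, ζ_{n-1}` are precisely the roots `λ_1, …, λ_n` of `u`. -/
theorem fiedler_spectrum (m : ℕ) (u : Polynomial ℝ) (hu : u.Monic)
    (hdeg : u.natDegree = m + 1) (lam : Fin (m + 1) → ℝ) (hlam : StrictAnti lam)
    (hroots : ∀ k, u.eval (lam k) = 0)
    (d : Fin m → ℝ) (hd : StrictAnti d)
    (hinter : ∀ j : Fin m, lam j.succ < d j ∧ d j < lam j.castSucc)
    (α : ℝ) (hα : α = -u.coeff m - ∑ j, d j)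
    (ζ : Fin m → ℝ)
    (hζ : ∀ j, ζ j =
      Real.sqrt (-u.eval (d j) / ∏ i ∈ Finset.univ.erase j, (d j - d i))) :
    ∀ μ : ℝ, Module.End.HasEigenvalue (Matrix.toLin' (arrowhead d ζ α)) μ ↔
      μ ∈ Set.range lam := by
  have hlamne : ∀ k j, lam k - d j ≠ 0 := by
    intro k j
    rcases Nat.lt_or_ge j.val k.val with h | h
    · have h1 : lam k ≤ lam j.succ := hlam.antitone (by rw [Fin.le_def]; simpa using h)
      have := (hinter j).1
      exact (by linarith : lam k - d j < 0).ne
    · have h1 : lam j.castSucc ≤ lam k := hlam.antitone (by rw [Fin.le_def]; simpa using h)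
      have := (hinter j).2
      exact (by linarith : 0 < lam k - d j).ne'
  have hζ2 : ∀ j, ζ j ^ 2 = -u.eval (d j) / ∏ i ∈ Finset.univ.erase j, (d j - d i) := by
    intro j
    rw [hζ, Real.sq_sqrt]
    rw [fs_prod (m + 1) u hu hdeg lam hlam.injective hroots]
    exact fs_pos m lam d hd hinter j
  have heig : ∀ k, Module.End.HasEigenvalue (Matrix.toLin' (arrowhead d ζ α)) (lam k) := by
    intro k
    apply fs_eig _ _ _ _ _ (hlamne k)
    have h := fs_interp m u hu hdeg d hd.injective α hα (lam k)
    rw [hroots k] at h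
    have hP : ∏ j, (lam k - d j) ≠ 0 := Finset.prod_ne_zero_iff.2 fun j _ => hlamne k j
    have h3 : ∀ j, u.eval (d j) *
        ∏ i ∈ Finset.univ.erase j, ((d j - d i)⁻¹ * (lam k - d i)) =
        - (ζ j ^ 2 / (lam k - d j)) * ∏ j, (lam k - d j) := by
      intro j
      have := hlamne k j
      rw [hζ2, ← Finset.mul_prod_erase Finset.univ _ (Finset.mem_univ j),
        Finset.prod_mul_distrib, Finset.prod_inv_distrib]
      field_simp
    simp only [h3] at h
    rw [← Finset.sum_mul, ← add_mul, Finset.sum_neg_distrib] at h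
    have := (mul_eq_zero.1 h.symm).resolve_right hP
    linarith
  intro μ
  constructor
  · intro hμ
    have key := fs_prod (m + 1) (arrowhead d ζ α).charpoly (Matrix.charpoly_monic _)
      (by simp [Matrix.charpoly_natDegree_eq_dim]) lam hlam.injective (fun k => by
        have := (Module.End.hasEigenvalue_iff_isRoot_charpoly _ _).1 (heig k)
        rwa [Matrix.charpoly_toLin'] at this) μ
    have h := (Module.End.hasEigenvalue_iff_isRoot_charpoly _ _).1 hμ
    rw [Matrix.charpoly_toLin', Polynomial.IsRoot, key, Finset.prod_eq_zero_iff] at h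
    obtain ⟨k, _, hk⟩ := h
    exact ⟨k, by linarith⟩
  · rintro ⟨k, rfl⟩
    exact heig k
end
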